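/- Let f ∈ ℂ[X₀,X₁] be homogeneous of degree d ≥ 3 and squarefree, and let F = Y^d − f(X₀,X₁) ∈ ℂ[Y,X₀,X₁]. Then the ℂ-vector space R_F^{2d−3} (the image of the degree-(2d−3) homogeneous part of ℂ[Y,X₀,X₁] in R_F = ℂ[Y,X₀,X₁]/J_F) has dimension (d−1)(d−2)/2, the genus of a smooth plane curve of degree d. -/

import Mathlib

open MvPolynomial

/-- The Jacobian ideal of a binary form `f ∈ ℂ[X₀,X₁] = S`: the ideal generated by the two
partial derivatives of `f`. -/
noncomputable def jacIdealS (f : MvPolynomial (Fin 2) ℂ) : Ideal (MvPolynomial (Fin 2) ℂ) :=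
  Ideal.span {pderiv 0 f, pderiv 1 f}

/-- The inclusion `S = ℂ[X₀,X₁] → T = ℂ[Y,X₀,X₁]`, where the variable `Y` of `T` is indexed
by `0` and `X₀, X₁` by `1, 2`. -/
noncomputable def embS : MvPolynomial (Fin 2) ℂ →ₐ[ℂ] MvPolynomial (Fin 3) ℂ :=
  rename Fin.succ

/-- `F = Y^d − f(X₀,X₁) ∈ T = ℂ[Y,X₀,X₁]`. -/
noncomputable def bigF (d : ℕ) (f : MvPolynomial (Fin 2) ℂ) : MvPolynomial (Fin 3) ℂ :=
  X 0 ^ d - embS f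

/-- The Jacobian ideal `J_F ⊆ T` of `F = Y^d − f`: the ideal generated by the three partial
derivatives `∂F/∂Y = d·Y^{d−1}`, `∂F/∂X₀ = −∂f/∂X₀`, `∂F/∂X₁ = −∂f/∂X₁`. -/
noncomputable def jacIdealT (d : ℕ) (f : MvPolynomial (Fin 2) ℂ) :
    Ideal (MvPolynomial (Fin 3) ℂ) :=
  Ideal.span {pderiv 0 (bigF d f), pderiv 1 (bigF d f), pderiv 2 (bigF d f)}

/-- `R_F^k`, the image of the degree-`k` homogeneous part of `T = ℂ[Y,X₀,X₁]` in the Jacobian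
ring `R_F = T/J_F`, as a `ℂ`-subspace of the quotient. -/
noncomputable def jacRingPieceT (d : ℕ) (f : MvPolynomial (Fin 2) ℂ) (k : ℕ) :
    Submodule ℂ (MvPolynomial (Fin 3) ℂ ⧸ jacIdealT d f) :=
  Submodule.map (Ideal.Quotient.mkₐ ℂ (jacIdealT d f)).toLinearMap
    (homogeneousSubmodule (Fin 3) ℂ k)

theorem aux_pderiv_deg (i : Fin 2) (a : MvPolynomial (Fin 2) ℂ) (h : pderiv i a ≠ 0) :
    (pderiv i a).totalDegree < a.totalDegree := by
  have hne : (pderiv i a).support.Nonempty := by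
    rwa [Finset.nonempty_iff_ne_empty, Ne, support_eq_empty]
  obtain ⟨m, hm, hmd⟩ := Finset.exists_mem_eq_sup _ hne (fun s : Fin 2 →₀ ℕ => s.sum fun _ e => e)
  have h1 : (pderiv i a).totalDegree = m.sum fun _ e => e := hmd
  have h2 : m + Finsupp.single i 1 ∈ a.support := by
    rw [mem_support_iff, coeff_pderiv] at hm
    rw [mem_support_iff]
    exact left_ne_zero_of_mul hm
  have h3 := le_totalDegree h2
  rw [Finsupp.sum_add_index' (by simp) (by simp), Finsupp.sum_single_index rfl] at h3
  omega

theorem aux_pderiv_dvd (i : Fin 2) (a : MvPolynomial (Fin 2) ℂ) (h : a ∣ pderiv i a) :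
    pderiv i a = 0 := by
  by_contra hne
  have h1 := aux_pderiv_deg i a hne
  obtain ⟨c, hc⟩ := h
  have ha : a ≠ 0 := by rintro rfl; simp at hne
  have hc0 : c ≠ 0 := by rintro rfl; simp at hc; exact hne hc
  rw [hc, totalDegree_mul_of_isDomain ha hc0] at h1
  omega

theorem aux_const (a : MvPolynomial (Fin 2) ℂ) (h : ∀ i, pderiv i a = 0) :
    a = C (coeff 0 a) := by
  ext m
  rw [coeff_C]
  split_ifs with hm
  · rw [← hm]
  · have : ∃ i, m i ≠ 0 := by
      by_contra! hcon
      exact hm (by ext i; simp [hcon i])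
    obtain ⟨i, hi⟩ := this
    have h1 := coeff_pderiv (i := i) a (m - Finsupp.single i 1)
    have h2 : m - Finsupp.single i 1 + Finsupp.single i 1 = m := by
      apply tsub_add_cancel_of_le
      rw [Finsupp.single_le_iff]
      omega
    rw [h i, h2, coeff_zero] at h1
    have h3 : (((m - Finsupp.single i 1 : Fin 2 →₀ ℕ) i : ℂ) + 1) ≠ 0 := Nat.cast_add_one_ne_zero _
    exact (mul_eq_zero.mp h1.symm).resolve_right h3

theorem aux_relprime (d : ℕ) (hd : 3 ≤ d) (f : MvPolynomial (Fin 2) ℂ)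
    (hf : f.IsHomogeneous d) (hsf : Squarefree f) :
    IsRelPrime (pderiv 0 f) (pderiv 1 f) := by
  have hE := hf.sum_X_mul_pderiv
  rw [Fin.sum_univ_two, nsmul_eq_mul] at hE
  have hdu : IsUnit ((d : MvPolynomial (Fin 2) ℂ)) := by
    have : (d : MvPolynomial (Fin 2) ℂ) = C (d : ℂ) := by simp
    rw [this]
    exact (isUnit_iff_ne_zero.mpr (by norm_cast; omega)).map C
  have hdvd : ∀ a, a ∣ pderiv 0 f → a ∣ pderiv 1 f → a ∣ f := by
    intro a h0 h1
    have : a ∣ (d : MvPolynomial (Fin 2) ℂ) * f := by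
      rw [← hE]; exact dvd_add (h0.mul_left _) (h1.mul_left _)
    exact (hdu.dvd_mul_left).mp this
  have hf0 : f ≠ 0 := hsf.ne_zero
  apply WfDvdMonoid.isRelPrime_of_no_irreducible_factors
  · rintro ⟨h0, h1⟩
    have := hdvd 0 (by simp [h0]) (by simp [h1])
    exact hf0 (zero_dvd_iff.mp this)
  · intro a ha h0 h1
    obtain ⟨g, hg⟩ := hdvd a h0 h1
    have hag : ¬ a ∣ g := by
      rintro ⟨e, rfl⟩
      exact ha.not_isUnit (hsf a ⟨e, by rw [hg]; ring⟩)
    have key : ∀ i, a ∣ pderiv i f → pderiv i a = 0 := by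
      intro i hi
      apply aux_pderiv_dvd
      rw [hg, pderiv_mul] at hi
      have : a ∣ pderiv i a * g := (dvd_add_left (dvd_mul_right a _)).mp hi
      exact ((UniqueFactorizationMonoid.irreducible_iff_prime.mp ha).dvd_or_dvd this).resolve_right hag
    have hc := aux_const a (by intro i; fin_cases i; exacts [key 0 h0, key 1 h1])
    have hne : coeff 0 a ≠ 0 := by
      intro h; rw [h] at hc; exact ha.ne_zero (by simpa using hc)
    apply ha.not_isUnit
    rw [hc]
    exact (isUnit_iff_ne_zero.mpr hne).map C

theorem aux_small (e : ℕ) (p q b c : MvPolynomial (Fin 2) ℂ) (hp : p.IsHomogeneous (e + 1))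
    (hpq : IsRelPrime p q) (hc : c.totalDegree ≤ e) (h : b * p + c * q = 0) : c = 0 := by
  have h1 : p ∣ c * q := ⟨-b, by linear_combination h⟩
  have h2 : p ∣ c := hpq.dvd_of_dvd_mul_right h1
  obtain ⟨r, rfl⟩ := h2
  by_contra hne
  have hp0 := left_ne_zero_of_mul hne
  have hr0 := right_ne_zero_of_mul hne
  rw [totalDegree_mul_of_isDomain hp0 hr0, hp.totalDegree hp0] at hc
  omega

theorem aux_emb (p : MvPolynomial (Fin 2) ℂ) : finSuccEquiv ℂ 2 (embS p) = Polynomial.C p := by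
  have : ((finSuccEquiv ℂ 2 : _ →ₐ[ℂ] _).comp embS) =
      (Algebra.ofId (MvPolynomial (Fin 2) ℂ) (Polynomial (MvPolynomial (Fin 2) ℂ))).restrictScalars ℂ := by
    apply MvPolynomial.algHom_ext
    intro i
    simp [embS, Algebra.ofId_apply, finSuccEquiv_X_succ]
  exact congrArg (fun φ => φ p) this

theorem aux_coeff_deg (e j : ℕ) (b : MvPolynomial (Fin 3) ℂ) (hb : b.IsHomogeneous e) :
    ((finSuccEquiv ℂ 2 b).coeff j).totalDegree ≤ e ∧
      (e < j → (finSuccEquiv ℂ 2 b).coeff j = 0) := by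
  by_cases h : (finSuccEquiv ℂ 2 b).coeff j = 0
  · simp [h]
  · have h1 := totalDegree_coeff_finSuccEquiv_add_le b j h
    have h2 := hb.totalDegree_le
    exact ⟨by omega, fun h3 => by omega⟩

theorem aux_inj (e : ℕ) (p q : MvPolynomial (Fin 2) ℂ) (hp : p.IsHomogeneous (e + 1))
    (hq : q.IsHomogeneous (e + 1)) (hpq : IsRelPrime p q) (a b c : MvPolynomial (Fin 3) ℂ)
    (hb : b.IsHomogeneous e) (hc : c.IsHomogeneous e)
    (h : a * X 0 ^ (e + 1) + b * embS p + c * embS q = 0) : a = 0 ∧ b = 0 ∧ c = 0 := by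
  have h' := congrArg (finSuccEquiv ℂ 2) h
  simp only [map_add, map_mul, map_pow, aux_emb, map_zero, finSuccEquiv_X_zero] at h'
  have hbc : ∀ j, (finSuccEquiv ℂ 2 b).coeff j = 0 ∧ (finSuccEquiv ℂ 2 c).coeff j = 0 := by
    intro j
    obtain ⟨b1, b2⟩ := aux_coeff_deg e j b hb
    obtain ⟨c1, c2⟩ := aux_coeff_deg e j c hc
    by_cases hj : e < j
    · exact ⟨b2 hj, c2 hj⟩
    · have h2 := congrArg (fun r => Polynomial.coeff r j) h'
      simp only [Polynomial.coeff_add, Polynomial.coeff_mul_C, Polynomial.coeff_zero,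
        Polynomial.coeff_mul_X_pow'] at h2
      rw [if_neg (by omega), zero_add] at h2
      exact ⟨aux_small e q p _ _ hq hpq.symm b1 (by rw [add_comm]; exact h2),
        aux_small e p q _ _ hp hpq c1 h2⟩
  have hb0 : b = 0 := (finSuccEquiv ℂ 2).injective (by ext1 j; simp [(hbc j).1])
  have hc0 : c = 0 := (finSuccEquiv ℂ 2).injective (by ext1 j; simp [(hbc j).2])
  refine ⟨?_, hb0, hc0⟩
  subst hb0 hc0
  simpa using h

theorem aux_finrank (n : ℕ) :
    Module.finrank ℂ (homogeneousSubmodule (Fin 3) ℂ n) = (n + 2).choose 2 := by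
  rw [homogeneousSubmodule_eq_finsupp_supported]
  rw [(AddMonoidAlgebra.supportedEquivFinsupp (R := ℂ) (S := ℂ) {d : Fin 3 →₀ ℕ | d.degree = n}).finrank_eq]
  have hs : {d : Fin 3 →₀ ℕ | d.degree = n} = ((Finset.univ : Finset (Fin 3)).finsuppAntidiag n : Set _) := by
    ext m
    simp [Finsupp.degree_eq_sum]
  rw [hs, Module.finrank_finsupp_self, ← Nat.card_eq_fintype_card, Nat.card_coe_set_eq, Set.ncard_coe_finset, Finset.card_finsuppAntidiag_nat_eq_choose,
    Finset.card_univ, Fintype.card_fin, show 3 + n - 1 = n + 2 by omega, Nat.choose_symm_add]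

theorem aux_comp (m e : ℕ) (a P : MvPolynomial (Fin 3) ℂ) (hP : P.IsHomogeneous m) :
    homogeneousComponent (e + m) (a * P) = homogeneousComponent e a * P := by
  letI := MvPolynomial.gradedAlgebra (σ := Fin 3) (R := ℂ)
  have := DirectSum.coe_decompose_mul_add_of_right_mem (homogeneousSubmodule (Fin 3) ℂ) (i := e)
    (a := a) (b := P) hP
  have h1 := decomposition.decompose'_apply (a * P) (e + m)
  have h2 := decomposition.decompose'_apply a e
  rw [← h1, ← h2]
  exact this

/-- The Koszul map `(a, b, c) ↦ a Y^(e+1) + b p + c q` on forms of degree `e`. -/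
noncomputable def auxMap (e : ℕ) (p q : MvPolynomial (Fin 2) ℂ) :
    (homogeneousSubmodule (Fin 3) ℂ e × homogeneousSubmodule (Fin 3) ℂ e ×
      homogeneousSubmodule (Fin 3) ℂ e) →ₗ[ℂ] MvPolynomial (Fin 3) ℂ where
  toFun x := x.1.1 * X 0 ^ (e + 1) + x.2.1.1 * embS p + x.2.2.1 * embS q
  map_add' x y := by simp; ring
  map_smul' r x := by simp [smul_add]

theorem aux_ideal (d : ℕ) (hd : 3 ≤ d) (f : MvPolynomial (Fin 2) ℂ) :
    jacIdealT d f = Ideal.span {X 0 ^ (d - 1), embS (pderiv 0 f), embS (pderiv 1 f)} := by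
  have h0 : pderiv 0 (bigF d f) = C (d : ℂ) * X 0 ^ (d - 1) := by
    have : pderiv 0 (embS f) = 0 := by
      apply pderiv_eq_zero_of_notMem_vars
      intro h
      have := vars_rename Fin.succ f h
      simp at this
    simp [bigF, this, pderiv_pow]
  have h1 : pderiv 1 (bigF d f) = - embS (pderiv 0 f) := by
    have := pderiv_rename (R := ℂ) (Fin.succ_injective 2) 0 f
    simp only [Fin.succ_zero_eq_one] at this
    simp [bigF, embS, this, pderiv_pow]
  have h2 : pderiv 2 (bigF d f) = - embS (pderiv 1 f) := by
    have := pderiv_rename (R := ℂ) (Fin.succ_injective 2) 1 f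
    simp only [Fin.succ_one_eq_two] at this
    simp [bigF, embS, this, pderiv_pow]
  have hu : IsUnit (C (d : ℂ) : MvPolynomial (Fin 3) ℂ) :=
    (isUnit_iff_ne_zero.mpr (by norm_cast; omega)).map C
  rw [jacIdealT, h0, h1, h2]
  simp only [Ideal.span_insert, Ideal.span_singleton_neg, Ideal.span_singleton_mul_left_unit hu]

/-- If `f ∈ ℂ[X₀,X₁]` is homogeneous of degree `d ≥ 3` and squarefree and
`F = Y^d − f(X₀,X₁)`, then `R_F^{2d−3}` has dimension `(d−1)(d−2)/2`, the genus of a smooth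
plane curve of degree `d`. -/
theorem stmt13 (d : ℕ) (hd : 3 ≤ d) (f : MvPolynomial (Fin 2) ℂ)
    (hf : f.IsHomogeneous d) (hsf : Squarefree f) :
    Module.finrank ℂ (jacRingPieceT d f (2 * d - 3)) = (d - 1) * (d - 2) / 2 := by
  have hrel := aux_relprime d hd f hf hsf
  have hid := aux_ideal d hd f
  obtain ⟨e, rfl⟩ : ∃ e, d = e + 2 := ⟨d - 2, by omega⟩
  have hp : (pderiv 0 f).IsHomogeneous (e + 1) := hf.pderiv
  have hq : (pderiv 1 f).IsHomogeneous (e + 1) := hf.pderiv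
  have hP : (embS (pderiv 0 f)).IsHomogeneous (e + 1) := hp.rename_isHomogeneous
  have hQ : (embS (pderiv 1 f)).IsHomogeneous (e + 1) := hq.rename_isHomogeneous
  have hX : (X 0 ^ (e + 1) : MvPolynomial (Fin 3) ℂ).IsHomogeneous (e + 1) :=
    isHomogeneous_X_pow 0 (e + 1)
  have hk : 2 * (e + 2) - 3 = e + (e + 1) := by omega
  have hfin : ∀ n, Module.Finite ℂ (homogeneousSubmodule (Fin 3) ℂ n) := fun n =>
    Module.Finite.iff_fg.mpr (homogeneousSubmodule_fg _ _ n)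
  set φ := auxMap e (pderiv 0 f) (pderiv 1 f) with hφ
  have hinj : Function.Injective φ := by
    rw [← LinearMap.ker_eq_bot, LinearMap.ker_eq_bot']
    rintro ⟨a, b, c⟩ h
    obtain ⟨h1, h2, h3⟩ := aux_inj e _ _ hp hq hrel a.1 b.1 c.1 b.2 c.2 h
    ext1
    · exact Subtype.ext h1
    · ext1
      · exact Subtype.ext h2
      · exact Subtype.ext h3
  set π := (Ideal.Quotient.mkₐ ℂ (jacIdealT (e + 2) f)).toLinearMap with hπ
  set H := homogeneousSubmodule (Fin 3) ℂ (e + (e + 1)) with hH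
  have hker : (LinearMap.ker (π.domRestrict H)).map H.subtype = LinearMap.range φ := by
    ext x
    simp only [Submodule.mem_map, LinearMap.mem_ker, LinearMap.mem_range]
    constructor
    · rintro ⟨⟨y, hy⟩, h1, rfl⟩
      have h2 : y ∈ jacIdealT (e + 2) f := Ideal.Quotient.eq_zero_iff_mem.mp h1
      rw [hid] at h2
      obtain ⟨a, b, c, h3⟩ := Submodule.mem_span_triple.mp h2
      refine ⟨⟨⟨_, homogeneousComponent_mem e a⟩, ⟨_, homogeneousComponent_mem e b⟩,
        ⟨_, homogeneousComponent_mem e c⟩⟩, ?_⟩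
      change homogeneousComponent e a * X 0 ^ (e + 1) +
        homogeneousComponent e b * embS (pderiv 0 f) +
        homogeneousComponent e c * embS (pderiv 1 f) = y
      rw [← aux_comp _ _ _ _ hX, ← aux_comp _ _ _ _ hP, ← aux_comp _ _ _ _ hQ, ← map_add,
        ← map_add]
      have h4 : a * X 0 ^ (e + 1) + b * embS (pderiv 0 f) + c * embS (pderiv 1 f) = y := h3
      rw [h4]
      exact homogeneousComponent_eq_self hy
    · rintro ⟨⟨a, b, c⟩, rfl⟩
      have hmem : φ (a, b, c) ∈ H :=
        ((IsHomogeneous.mul a.2 hX).add (IsHomogeneous.mul b.2 hP)).add (IsHomogeneous.mul c.2 hQ)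
      refine ⟨⟨_, hmem⟩, ?_, rfl⟩
      apply Ideal.Quotient.eq_zero_iff_mem.mpr
      rw [hid]
      exact Submodule.mem_span_triple.mpr ⟨a.1, b.1, c.1, rfl⟩
  have hrange : Module.finrank ℂ (LinearMap.range φ) = 3 * (e + 2).choose 2 := by
    rw [LinearMap.finrank_range_of_inj hinj, Module.finrank_prod, Module.finrank_prod, aux_finrank]
    ring
  have hrn := LinearMap.finrank_range_add_finrank_ker (π.domRestrict H)
  have hr : LinearMap.range (π.domRestrict H) = jacRingPieceT (e + 2) f (2 * (e + 2) - 3) := by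
    rw [hk, LinearMap.range_domRestrict]
    rfl
  have hk2 : Module.finrank ℂ (LinearMap.ker (π.domRestrict H)) = 3 * (e + 2).choose 2 := by
    rw [← hrange, ← hker]
    exact (LinearEquiv.finrank_eq (Submodule.equivMapOfInjective _ H.injective_subtype _))
  rw [hr, hk2, hH, aux_finrank] at hrn
  have e1 : 2 * (e + 2).choose 2 = (e + 2) * (e + 1) := by
    rw [Nat.choose_two_right]
    exact Nat.mul_div_cancel' (Nat.even_mul_pred_self (e + 2)).two_dvd
  have e2 : 2 * (e + (e + 1) + 2).choose 2 = (e + (e + 1) + 2) * (e + (e + 1) + 1) := by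
    rw [Nat.choose_two_right]
    exact Nat.mul_div_cancel' (Nat.even_mul_pred_self (e + (e + 1) + 2)).two_dvd
  symm
  apply Nat.div_eq_of_eq_mul_right (by norm_num)
  have : e + 2 - 1 = e + 1 := by omega
  rw [this, Nat.add_sub_cancel]
  nlinarith
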